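/- PF(u) is a simple polytope — equivalently, for every extreme point v of PF(u) the normal cone ncone(v, PF(u)) is a full-dimensional simplicial cone — if and only if the multiplicity vector m(u) = (m_0, m_1, …, m_ℓ) satisfies m(u) = (0, n), or m(u) = (n−1, 1), or ℓ ≥ 2 and m_1 = m_2 = ⋯ = m_{ℓ−1} = 1. -/

import Mathlib

noncomputable section

/-- `a` is a `u`-parking function. -/
def IsParkingFunction (n : ℕ) (u a : Fin n → ℝ) : Prop :=
  (∀ i, 0 ≤ a i) ∧
    ∃ σ : Equiv.Perm (Fin n), Monotone (fun i => a (σ i)) ∧ ∀ i, a (σ i) ≤ u i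

/-- The parking function polytope. -/
def PF (n : ℕ) (u : Fin n → ℝ) : Set (Fin n → ℝ) :=
  convexHull ℝ {a | IsParkingFunction n u a}

/-- The normal cone of `P` at `v`. -/
def ncone (n : ℕ) (P : Set (Fin n → ℝ)) (v : Fin n → ℝ) : Set (Fin n → ℝ) :=
  {w | ∀ y ∈ P, ∑ i, w i * y i ≤ ∑ i, w i * v i}

/-- `σ` is a full-dimensional simplicial cone in `ℝⁿ`: generated by `n`
linearly independent vectors. -/
def IsSimplicialFullCone (n : ℕ) (σ : Set (Fin n → ℝ)) : Prop :=
  ∃ r : Fin n → (Fin n → ℝ), LinearIndependent ℝ r ∧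
    σ = {x | ∃ lam : Fin n → ℝ, (∀ i, 0 ≤ lam i) ∧ x = ∑ i, lam i • r i}

/-!
Add to `{1, …, n}` an element `⊥` at which every functional is `0`. Up to a permutation, a vertex of
`PF n u` is a truncation `v` of `u`, and its normal cone consists of the functions on
`{⊥, 1, …, n}` that vanish at `⊥` and preserve an order: the positive coordinates of `v` lie above
`⊥` and are ordered by the values of `u`, and the zero coordinates lie below `⊥` or, if `v = u`,
below all positive coordinates. When the Hasse diagram of this order is a tree, its `n` edges give
linearly independent inequalities and the cone is simplicial. A cycle can only come from a repeated
positive value of `u`, either below a larger value or at the smallest positive value when `u` has a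
zero. Both kinds of cycle occur already at the vertex `u`, and there they contradict the Riesz
decomposition property, which every simplicial cone has.
-/

section Cones

variable {n : ℕ}

lemma isSimplicialFullCone_nonneg : IsSimplicialFullCone n {x | 0 ≤ x} := by
  refine ⟨fun i => Pi.single i 1, Pi.linearIndependent_single_one (Fin n) ℝ, ?_⟩
  ext x
  have hsum (lam : Fin n → ℝ) : ∑ i, lam i • (Pi.single i 1 : Fin n → ℝ) = lam := by
    simpa using (Pi.basisFun ℝ (Fin n)).sum_repr lam
  simp only [hsum, Set.mem_ofPred_eq, exists_eq_right', Pi.le_def, Pi.zero_apply]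

lemma IsSimplicialFullCone.preimage {C : Set (Fin n → ℝ)} (hC : IsSimplicialFullCone n C)
    (E : (Fin n → ℝ) ≃ₗ[ℝ] (Fin n → ℝ)) : IsSimplicialFullCone n (E ⁻¹' C) := by
  obtain ⟨r, hr, rfl⟩ := hC
  refine ⟨fun i => E.symm (r i), hr.map' E.symm.toLinearMap (LinearEquiv.ker _), ?_⟩
  ext w
  simp only [Set.mem_preimage, Set.mem_ofPred_eq]
  refine exists_congr fun lam => and_congr_right fun _ => ?_
  rw [← E.symm.injective.eq_iff, E.symm_apply_apply, map_sum]
  simp only [map_smul]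

lemma IsSimplicialFullCone.of_halfspaces {C : Set (Fin n → ℝ)}
    (f : Fin n → Module.Dual ℝ (Fin n → ℝ)) (hC : ∀ w, w ∈ C ↔ ∀ i, 0 ≤ f i w)
    (hsalient : ∀ w ∈ C, -w ∈ C → w = 0) : IsSimplicialFullCone n C := by
  have hinj : Function.Injective (LinearMap.pi f) := by
    rw [injective_iff_map_eq_zero]
    intro w hw
    have hfw (i) : f i w = 0 := congrFun hw i
    exact hsalient w ((hC w).2 fun i => (hfw i).ge)
      ((hC (-w)).2 fun i => by rw [map_neg, hfw, neg_zero])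
  have hpre : C = LinearEquiv.ofInjectiveEndo (LinearMap.pi f) hinj ⁻¹' {x | 0 ≤ x} :=
    Set.ext hC
  exact hpre ▸ isSimplicialFullCone_nonneg.preimage _

lemma IsSimplicialFullCone.exists_riesz_decomposition {C : Set (Fin n → ℝ)}
    (hC : IsSimplicialFullCone n C) {p q r s : Fin n → ℝ} (hp : p ∈ C) (hq : q ∈ C) (hr : r ∈ C)
    (hs : s ∈ C) (h : p + q = r + s) :
    ∃ a ∈ C, ∃ b ∈ C, a + b = p ∧ r - a ∈ C ∧ s - b ∈ C := by
  obtain ⟨e, he, rfl⟩ := hC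
  obtain ⟨p, hp, rfl⟩ := hp
  obtain ⟨q, hq, rfl⟩ := hq
  obtain ⟨r, hr, rfl⟩ := hr
  obtain ⟨s, hs, rfl⟩ := hs
  have hcoord (i) : p i + q i = r i + s i := by
    simp only [← Finset.sum_add_distrib, ← add_smul] at h
    exact congrFun (he.fintypeLinearCombination_injective h) i
  refine ⟨_, ⟨fun i => min (p i) (r i), fun i => le_min (hp i) (hr i), rfl⟩,
    _, ⟨fun i => p i - min (p i) (r i), fun i => sub_nonneg.2 (min_le_left _ _), rfl⟩, ?_,
    ⟨fun i => r i - min (p i) (r i), fun i => sub_nonneg.2 (min_le_right _ _), ?_⟩,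
    ⟨fun i => s i - (p i - min (p i) (r i)), fun i => ?_, ?_⟩⟩
  · simp only [← Finset.sum_add_distrib, ← add_smul, add_sub_cancel]
  · simp only [sub_smul, Finset.sum_sub_distrib]
  · rw [sub_nonneg, sub_le_iff_le_add, ← sub_le_iff_le_add']
    exact le_min (by linarith [hs i]) (by linarith [hq i, hcoord i])
  · simp only [sub_smul, Finset.sum_sub_distrib]

end Cones

section NormalCones

variable {n : ℕ} {P : Set (Fin n → ℝ)} {v w : Fin n → ℝ}

lemma dotProduct_update {ι R : Type*} [Fintype ι] [DecidableEq ι] [Ring R] (w v : ι → R) (i : ι)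
    (t : R) : w ⬝ᵥ Function.update v i t = w ⬝ᵥ v + w i * (t - v i) := by
  have hupdate : Function.update v i t = v + Pi.single i (t - v i) := by
    ext j
    rcases eq_or_ne j i with rfl | hji <;> simp [*]
  rw [hupdate, dotProduct_add, dotProduct_single]

lemma dotProduct_comp_swap {ι R : Type*} [Fintype ι] [DecidableEq ι] [CommRing R] (w v : ι → R)
    (i j : ι) : w ⬝ᵥ (v ∘ Equiv.swap i j) = w ⬝ᵥ v - (w i - w j) * (v i - v j) := by
  rw [Equiv.comp_swap_eq_update, dotProduct_update, dotProduct_update]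
  rcases eq_or_ne i j with rfl | hij
  · simp
  · rw [Function.update_of_ne hij]
    ring

lemma mem_ncone_convexHull {S : Set (Fin n → ℝ)} :
    w ∈ ncone n (convexHull ℝ S) v ↔ ∀ y ∈ S, w ⬝ᵥ y ≤ w ⬝ᵥ v :=
  ⟨fun h y hy => h y (subset_convexHull ℝ S hy), fun h => convexHull_min h
    (convex_halfSpace_le ⟨dotProduct_add w, fun c y => dotProduct_smul c w y⟩ (w ⬝ᵥ v))⟩

lemma mem_extremePoints_of_span_ncone_eq_top (hv : v ∈ P)
    (hspan : Submodule.span ℝ (ncone n P v) = ⊤) : v ∈ Set.extremePoints ℝ P := by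
  rw [mem_extremePoints_iff_left]
  refine ⟨hv, ?_⟩
  rintro x hx y hy ⟨a, b, ha, hb, hab, rfl⟩
  set v := a • x + b • y
  have hcone : ∀ w ∈ ncone n P v, w ⬝ᵥ (x - v) = 0 := by
    intro w hw
    have hxw : w ⬝ᵥ x ≤ w ⬝ᵥ v := hw x hx
    have hyw : w ⬝ᵥ y ≤ w ⬝ᵥ v := hw y hy
    have hvw : w ⬝ᵥ v = a * w ⬝ᵥ x + b * w ⬝ᵥ y := by
      simp only [v, dotProduct_add, dotProduct_smul, smul_eq_mul]
    rw [dotProduct_sub]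
    obtain rfl : b = 1 - a := by linarith
    nlinarith
  have hall : ∀ w : Fin n → ℝ, w ⬝ᵥ (x - v) = 0 := by
    intro w
    have hw : w ∈ Submodule.span ℝ (ncone n P v) := hspan ▸ Submodule.mem_top
    induction hw using Submodule.span_induction with
    | mem w hw => exact hcone w hw
    | zero => exact zero_dotProduct _
    | add w w' _ _ hw hw' => rw [add_dotProduct, hw, hw', add_zero]
    | smul c w _ hw => rw [smul_dotProduct, hw, smul_zero]
  exact sub_eq_zero.1 (dotProduct_self_eq_zero.1 (hall (x - v)))

end NormalCones

section ParkingFunctions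

variable {n : ℕ} {u a w : Fin n → ℝ}

lemma exists_le_le_perm_apply (π : Equiv.Perm (Fin n)) (i : Fin n) : ∃ q ≤ i, i ≤ π q := by
  by_contra! h
  have hcard : (Finset.Iic i).card ≤ (Finset.Iio i).card :=
    Finset.card_le_card_of_injOn π (fun q hq => by simpa using h q (by simpa using hq))
      π.injective.injOn
  rw [Fin.card_Iic, Fin.card_Iio] at hcard
  omega

lemma isParkingFunction_iff (hmono : Monotone u) :
    IsParkingFunction n u a ↔ (∀ i, 0 ≤ a i) ∧ ∃ σ : Equiv.Perm (Fin n), ∀ i, a (σ i) ≤ u i := by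
  refine and_congr_right fun _ => ⟨fun ⟨σ, _, hσ⟩ => ⟨σ, hσ⟩, ?_⟩
  rintro ⟨σ, hσ⟩
  refine ⟨Tuple.sort a, Tuple.monotone_sort a, fun i => ?_⟩
  obtain ⟨q, hqi, hiq⟩ := exists_le_le_perm_apply (σ.trans (Tuple.sort a).symm) i
  calc a (Tuple.sort a i) ≤ a (Tuple.sort a ((Tuple.sort a).symm (σ q))) :=
        Tuple.monotone_sort a hiq
    _ = a (σ q) := by rw [Equiv.apply_symm_apply]
    _ ≤ u q := hσ q
    _ ≤ u i := hmono hqi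

lemma IsParkingFunction.mem_PF (ha : IsParkingFunction n u a) : a ∈ PF n u :=
  subset_convexHull ℝ _ ha

lemma IsParkingFunction.comp_perm (ha : IsParkingFunction n u a) (τ : Equiv.Perm (Fin n)) :
    IsParkingFunction n u (a ∘ τ) := by
  obtain ⟨hnonneg, σ, hmono, hle⟩ := ha
  refine ⟨fun i => hnonneg (τ i), σ.trans τ.symm, ?_, ?_⟩
  · simpa using hmono
  · simpa using hle

lemma IsParkingFunction.dotProduct_le (ha : IsParkingFunction n u a) (hw : Monovary w⁺ u) :
    w ⬝ᵥ a ≤ w⁺ ⬝ᵥ u := by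
  obtain ⟨hnonneg, σ, -, hle⟩ := ha
  calc w ⬝ᵥ a ≤ w⁺ ⬝ᵥ a := dotProduct_le_dotProduct_of_nonneg_right (le_posPart w) hnonneg
    _ = (w⁺ ∘ σ) ⬝ᵥ (a ∘ σ) := (comp_equiv_dotProduct_comp_equiv _ _ σ).symm
    _ ≤ (w⁺ ∘ σ) ⬝ᵥ u :=
        dotProduct_le_dotProduct_of_nonneg_left hle fun i => posPart_nonneg w (σ i)
    _ ≤ w⁺ ⬝ᵥ u := hw.sum_comp_perm_mul_le_sum_mul

lemma comp_perm_mem_ncone_PF_iff {v : Fin n → ℝ} (σ : Equiv.Perm (Fin n)) :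
    w ∘ σ ∈ ncone n (PF n u) (v ∘ σ) ↔ w ∈ ncone n (PF n u) v := by
  unfold PF
  simp only [mem_ncone_convexHull, comp_equiv_dotProduct_comp_equiv]
  constructor
  · intro h y hy
    simpa only [comp_equiv_dotProduct_comp_equiv] using h (y ∘ σ) (hy.comp_perm σ)
  · intro h y hy
    rw [← dotProduct_comp_equiv_symm]
    exact h (y ∘ σ.symm) (hy.comp_perm σ.symm)

lemma isParkingFunction_update (hmono : Monotone u) (ha : ∀ i, 0 ≤ a i) {σ : Equiv.Perm (Fin n)}
    (hσ : ∀ i, a (σ i) ≤ u i) {i : Fin n} {t : ℝ} (ht : 0 ≤ t) (htu : t ≤ u i) :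
    IsParkingFunction n u (Function.update a (σ i) t) := by
  refine (isParkingFunction_iff hmono).2 ⟨fun j => ?_, σ, fun j => ?_⟩
  · rw [Function.update_apply]
    split_ifs
    exacts [ht, ha j]
  · rcases eq_or_ne j i with rfl | hji
    · rwa [Function.update_self]
    · rw [Function.update_of_ne (σ.injective.ne hji)]
      exact hσ j

lemma isParkingFunction_single (hmono : Monotone u) (hnonneg : ∀ i, 0 ≤ u i) (i l : Fin n) :
    IsParkingFunction n u (Pi.single i (u l)) := by
  have hupdate := isParkingFunction_update (a := 0) (σ := Equiv.swap i l) hmono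
    (fun _ => le_rfl) hnonneg (hnonneg l) le_rfl
  rwa [Equiv.swap_apply_right] at hupdate

lemma eq_zero_of_mem_ncone_PF_of_neg_mem {v : Fin n → ℝ} (hmono : Monotone u)
    (hnonneg : ∀ i, 0 ≤ u i) {l : Fin n} (hl : 0 < u l) (hw : w ∈ ncone n (PF n u) v)
    (hw' : -w ∈ ncone n (PF n u) v) : w = 0 := by
  have hconst {y : Fin n → ℝ} (hy : IsParkingFunction n u y) : w ⬝ᵥ y = w ⬝ᵥ v := by
    refine le_antisymm (hw y hy.mem_PF) ?_
    have hneg : -w ⬝ᵥ y ≤ -w ⬝ᵥ v := hw' y hy.mem_PF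
    rwa [neg_dotProduct, neg_dotProduct, neg_le_neg_iff] at hneg
  have hzero : IsParkingFunction n u 0 :=
    ⟨fun _ => le_rfl, Equiv.refl _, monotone_const, hnonneg⟩
  ext i
  have hsingle := (hconst (isParkingFunction_single hmono hnonneg i l)).trans (hconst hzero).symm
  rw [dotProduct_single, dotProduct_zero] at hsingle
  exact (mul_eq_zero.1 hsingle).resolve_right hl.ne'

end ParkingFunctions

section Truncations

variable {n : ℕ} {u v w : Fin n → ℝ}

/-- `v` is a vertex of `PF n u` in nondecreasing order: some of the coordinates of `u` (by
monotonicity of `v`, an initial segment of the positive ones) are replaced by `0`. -/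
structure IsTruncation (u v : Fin n → ℝ) : Prop where
  mono : Monotone v
  eq_zero_or_eq : ∀ i, v i = 0 ∨ v i = u i

lemma isTruncation_self (hmono : Monotone u) : IsTruncation u u := ⟨hmono, fun _ => Or.inr rfl⟩

lemma exists_isTruncation_comp_perm (hmono : Monotone u)
    (hv : v ∈ Set.extremePoints ℝ (PF n u)) :
    ∃ σ : Equiv.Perm (Fin n), IsTruncation u (v ∘ σ) := by
  have hpark : v ∈ {a | IsParkingFunction n u a} := extremePoints_convexHull_subset hv
  obtain ⟨hnonneg, σ, hmonoσ, hle⟩ := hpark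
  refine ⟨σ, hmonoσ, fun i => ?_⟩
  by_contra! hne
  have hpos : 0 < v (σ i) := (hnonneg _).lt_of_ne hne.1.symm
  have hlt : v (σ i) < u i := (hle i).lt_of_ne hne.2
  have hmem {t : ℝ} (ht : 0 ≤ t) (htu : t ≤ u i) : Function.update v (σ i) t ∈ PF n u :=
    (isParkingFunction_update hmono hnonneg hle ht htu).mem_PF
  have hseg : v ∈ openSegment ℝ (Function.update v (σ i) 0) (Function.update v (σ i) (u i)) := by
    rw [← Pi.image_update_openSegment, openSegment_eq_Ioo (hpos.trans hlt)]
    exact ⟨v (σ i), ⟨hpos, hlt⟩, Function.update_eq_self _ v⟩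
  have hui : 0 ≤ u i := (hpos.trans hlt).le
  have heq := (mem_extremePoints_iff_left.1 hv).2 _ (hmem le_rfl hui) _ (hmem hui le_rfl) hseg
  exact hne.1 (by simpa using (congrFun heq (σ i)).symm)

namespace IsTruncation

lemma nonneg (hv : IsTruncation u v) (hnonneg : ∀ i, 0 ≤ u i) (i : Fin n) : 0 ≤ v i := by
  rcases hv.eq_zero_or_eq i with h | h
  exacts [h.ge, h ▸ hnonneg i]

lemma le (hv : IsTruncation u v) (hnonneg : ∀ i, 0 ≤ u i) (i : Fin n) : v i ≤ u i := by
  rcases hv.eq_zero_or_eq i with h | h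
  exacts [h ▸ hnonneg i, h.le]

lemma eq_of_pos (hv : IsTruncation u v) {i : Fin n} (hi : 0 < v i) : v i = u i :=
  (hv.eq_zero_or_eq i).resolve_left hi.ne'

lemma isParkingFunction (hv : IsTruncation u v) (hnonneg : ∀ i, 0 ≤ u i) :
    IsParkingFunction n u v :=
  ⟨hv.nonneg hnonneg, Equiv.refl _, hv.mono, hv.le hnonneg⟩

lemma nonneg_of_mem_ncone (hv : IsTruncation u v) (hmono : Monotone u) (hnonneg : ∀ i, 0 ≤ u i)
    (hw : w ∈ ncone n (PF n u) v) {i : Fin n} (hi : 0 < v i) : 0 ≤ w i := by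
  have hpark : IsParkingFunction n u (Function.update v i 0) :=
    isParkingFunction_update (σ := Equiv.refl _) hmono (hv.nonneg hnonneg) (hv.le hnonneg) le_rfl
      (hnonneg i)
  have hle : w ⬝ᵥ Function.update v i 0 ≤ w ⬝ᵥ v := hw _ hpark.mem_PF
  rw [dotProduct_update] at hle
  nlinarith

lemma nonpos_of_mem_ncone (hv : IsTruncation u v) (hmono : Monotone u) (hnonneg : ∀ i, 0 ≤ u i)
    (hw : w ∈ ncone n (PF n u) v) {i m : Fin n} (hi : v i = 0) (hm : v m = 0) (hum : 0 < u m) :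
    w i ≤ 0 := by
  have hswap (j) : v (Equiv.swap i m j) ≤ u j := by
    rw [Equiv.swap_apply_def]
    split_ifs
    exacts [hm ▸ hnonneg j, hi ▸ hnonneg j, hv.le hnonneg j]
  have hpark : IsParkingFunction n u (Function.update v i (u m)) := by
    simpa only [Equiv.swap_apply_right] using
      isParkingFunction_update hmono (hv.nonneg hnonneg) hswap hum.le le_rfl
  have hle : w ⬝ᵥ Function.update v i (u m) ≤ w ⬝ᵥ v := hw _ hpark.mem_PF
  rw [dotProduct_update, hi] at hle
  nlinarith

lemma le_of_mem_ncone (hv : IsTruncation u v) (hnonneg : ∀ i, 0 ≤ u i)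
    (hw : w ∈ ncone n (PF n u) v) {i j : Fin n} (hj : 0 < v j) (hij : u i < u j) : w i ≤ w j := by
  have hpark : IsParkingFunction n u (v ∘ Equiv.swap i j) :=
    (hv.isParkingFunction hnonneg).comp_perm _
  have hle : w ⬝ᵥ (v ∘ Equiv.swap i j) ≤ w ⬝ᵥ v := hw _ hpark.mem_PF
  rw [dotProduct_comp_swap] at hle
  have hlt : v i < v j := (hv.le hnonneg i).trans_lt (hij.trans_eq (hv.eq_of_pos hj).symm)
  nlinarith

lemma mem_ncone_iff (hv : IsTruncation u v) (hmono : Monotone u) (hnonneg : ∀ i, 0 ≤ u i) :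
    w ∈ ncone n (PF n u) v ↔
      (∀ i, 0 < v i → 0 ≤ w i) ∧ (∀ i m, v i = 0 → v m = 0 → 0 < u m → w i ≤ 0) ∧
      ∀ i j, 0 < v j → u i < u j → w i ≤ w j := by
  refine ⟨fun hw => ⟨fun i => hv.nonneg_of_mem_ncone hmono hnonneg hw,
    fun i m => hv.nonpos_of_mem_ncone hmono hnonneg hw,
    fun i j => hv.le_of_mem_ncone hnonneg hw⟩, ?_⟩
  rintro ⟨hpos, hzero, hle⟩
  have hmonovary : Monovary w⁺ u := by
    intro i j hij
    rcases (hv.nonneg hnonneg j).eq_or_lt with hj | hj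
    · have hi : v i = 0 :=
        le_antisymm (hj ▸ hv.mono (hmono.reflect_lt hij).le) (hv.nonneg hnonneg i)
      have hwi : w i ≤ 0 := hzero i j hi hj.symm ((hnonneg i).trans_lt hij)
      rw [Pi.posPart_apply, posPart_eq_zero.2 hwi]
      exact posPart_nonneg w j
    · exact posPart_mono (hle i j hj hij)
  have hdot : w⁺ ⬝ᵥ u = w ⬝ᵥ v := by
    refine Finset.sum_congr rfl fun i _ => ?_
    rw [Pi.posPart_apply]
    rcases (hv.nonneg hnonneg i).eq_or_lt with hi | hi
    · rcases (hnonneg i).eq_or_lt with hui | hui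
      · rw [← hi, ← hui, mul_zero, mul_zero]
      · rw [posPart_eq_zero.2 (hzero i i hi.symm hi.symm hui), ← hi, zero_mul, mul_zero]
    · rw [posPart_eq_self.2 (hpos i hi), hv.eq_of_pos hi]
  exact mem_ncone_convexHull.2 fun y hy => (hy.dotProduct_le hmonovary).trans_eq hdot

end IsTruncation

lemma mem_ncone_PF_self_iff (hmono : Monotone u) (hnonneg : ∀ i, 0 ≤ u i) :
    w ∈ ncone n (PF n u) u ↔ Monovary w u ∧ ∀ i, 0 < u i → 0 ≤ w i := by
  rw [(isTruncation_self hmono).mem_ncone_iff hmono hnonneg]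
  constructor
  · rintro ⟨hpos, -, hle⟩
    exact ⟨fun i j hij => hle i j ((hnonneg i).trans_lt hij) hij, hpos⟩
  · rintro ⟨hle, hpos⟩
    exact ⟨hpos, fun i m _ hm hum => absurd hm hum.ne', fun i j _ hij => hle hij⟩

lemma mem_extremePoints_PF_self (hmono : Monotone u) (hnonneg : ∀ i, 0 ≤ u i) :
    u ∈ Set.extremePoints ℝ (PF n u) := by
  refine mem_extremePoints_of_span_ncone_eq_top
    ((isTruncation_self hmono).isParkingFunction hnonneg).mem_PF (top_unique ?_)
  rw [← (Pi.basisFun ℝ (Fin n)).span_eq, Submodule.span_le]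
  rintro _ ⟨j, rfl⟩
  have hcone {w : Fin n → ℝ} (hw : Monotone w) (hw0 : 0 ≤ w) : w ∈ ncone n (PF n u) u :=
    (mem_ncone_PF_self_iff hmono hnonneg).2
      ⟨fun _ _ hij => hw (hmono.reflect_lt hij).le, fun i _ => hw0 i⟩
  -- The index function increases in steps of `1`, so it stays monotone after adding `1` at `j`.
  let c : Fin n → ℝ := fun i => (i : ℕ)
  have hc : Monotone c := fun i k hik => Nat.cast_le.2 hik
  have hcj : Monotone (c + Pi.single j 1) := by
    intro i k hik
    rcases hik.eq_or_lt with rfl | hlt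
    · rfl
    · have hstep : ((i : ℕ) : ℝ) + 1 ≤ (k : ℕ) := by exact_mod_cast hlt
      simp only [c, Pi.add_apply, Pi.single_apply]
      split_ifs <;> linarith
  have hc0 : 0 ≤ c := fun i => Nat.cast_nonneg _
  have hsub := Submodule.sub_mem _
    (Submodule.subset_span (R := ℝ) (hcone hcj (add_nonneg hc0 (Pi.single_nonneg.2 zero_le_one))))
    (Submodule.subset_span (hcone hc hc0))
  simpa using hsub

end Truncations

/-- The condition on the multiplicities of `u` in terms of ties: a repeated positive value is the
largest value and, if `u` has a zero, is not the smallest positive one. It says that the Hasse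
diagrams of the orders defining the normal cones of `PF n u` have no cycles. -/
structure IsTreeLike {ι : Type*} (u : ι → ℝ) : Prop where
  le_of_tie : ∀ ⦃i j⦄, i ≠ j → 0 < u i → u i = u j → ∀ l, u l ≤ u i
  exists_lt_of_tie : ∀ ⦃z i j⦄, u z = 0 → i ≠ j → 0 < u i → u i = u j → ∃ m, 0 < u m ∧ u m < u i

section Cycles

variable {n : ℕ} {u : Fin n → ℝ}

lemma indicator_mem_ncone_PF_self (hmono : Monotone u) (hnonneg : ∀ i, 0 ≤ u i)
    {S : Set (Fin n)} (hS : ∀ i j, u i < u j → i ∈ S → j ∈ S) :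
    S.indicator 1 ∈ ncone n (PF n u) u := by
  refine (mem_ncone_PF_self_iff hmono hnonneg).2 ⟨fun i j hij => ?_,
    fun i _ => Set.indicator_nonneg (fun _ _ => zero_le_one) i⟩
  by_cases hi : i ∈ S
  · rw [Set.indicator_of_mem hi, Set.indicator_of_mem (hS i j hij hi), Pi.one_apply, Pi.one_apply]
  · rw [Set.indicator_of_notMem hi]
    exact Set.indicator_nonneg (fun _ _ => zero_le_one) j

-- The Hasse diagram contains the cycle `0 < j < l > k > 0`.
lemma not_isSimplicialFullCone_of_tie_lt (hmono : Monotone u) (hnonneg : ∀ i, 0 ≤ u i)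
    {j k l : Fin n} (hjk : j ≠ k) (hj : 0 < u j) (htie : u j = u k) (hl : u j < u l) :
    ¬ IsSimplicialFullCone n (ncone n (PF n u) u) := by
  intro hsimp
  let A : Set (Fin n) := {i | u j < u i ∨ i = j}
  let B : Set (Fin n) := {i | u j ≤ u i ∧ i ≠ j}
  have hA : ∀ x y, u x < u y → x ∈ A → y ∈ A := by grind
  have hB : ∀ x y, u x < u y → x ∈ B → y ∈ B := by grind
  have hAB : ∀ x y, u x < u y → x ∈ A ∪ B → y ∈ A ∪ B :=
    fun x y hxy => Or.imp (hA x y hxy) (hB x y hxy)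
  have hAB' : ∀ x y, u x < u y → x ∈ A ∩ B → y ∈ A ∩ B :=
    fun x y hxy => And.imp (hA x y hxy) (hB x y hxy)
  have hmem {S : Set (Fin n)} := indicator_mem_ncone_PF_self hmono hnonneg (S := S)
  obtain ⟨a, ha, b, hb, hab, hra, hsb⟩ := hsimp.exists_riesz_decomposition (hmem hA) (hmem hB)
    (hmem hAB) (hmem hAB') (Set.indicator_union_add_inter 1 A B).symm
  rw [mem_ncone_PF_self_iff hmono hnonneg] at ha hb hra hsb
  have hk : 0 < u k := htie ▸ hj
  have habj : a j + b j = 1 := by simpa [A] using congrFun hab j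
  have habk : a k + b k = 0 := by simpa [A, htie, hjk.symm] using congrFun hab k
  have hkl : u k < u l := htie ▸ hl
  have hakl : 1 - a k ≤ 1 - a l := by simpa [A, B, htie, hjk.symm, hkl] using hra.1 hkl
  have hbj : b j ≤ 0 := by simpa [B] using hsb.2 j hj
  linarith [ha.1 hl, ha.2 k hk, hb.2 k hk]

-- The Hasse diagram contains the cycle `0 < j > z < k > 0`.
lemma not_isSimplicialFullCone_of_zero_of_tie (hmono : Monotone u) (hnonneg : ∀ i, 0 ≤ u i)
    {z j k : Fin n} (hz : u z = 0) (hjk : j ≠ k) (hj : 0 < u j) (htie : u j = u k)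
    (honly : ∀ i, 0 < u i → u i = u j) :
    ¬ IsSimplicialFullCone n (ncone n (PF n u) u) := by
  intro hsimp
  let B : Set (Fin n) := {i | 0 < u i ∧ i ≠ j}
  let D : Set (Fin n) := {i | 0 < u i ∨ i = z}
  have hA : ∀ x y, u x < u y → x ∈ ({j} : Set (Fin n)) → y ∈ ({j} : Set (Fin n)) := by grind
  have hB : ∀ x y, u x < u y → x ∈ B → y ∈ B := by grind
  have hD : ∀ x y, u x < u y → x ∈ D → y ∈ D := by grind
  have hneg : -Pi.single z 1 ∈ ncone n (PF n u) u := by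
    refine (mem_ncone_PF_self_iff hmono hnonneg).2 ⟨fun i i' hi => ?_, fun i hi => ?_⟩ <;>
      simp only [Pi.neg_apply, Pi.single_apply] <;> grind
  have hsum : Set.indicator {j} 1 + B.indicator 1 =
      D.indicator 1 + -(Pi.single z 1 : Fin n → ℝ) := by
    ext i
    simp only [Pi.add_apply, Pi.neg_apply, Pi.single_apply, Set.indicator_apply, B, D,
      Set.mem_ofPred_eq, Set.mem_singleton_iff, Pi.one_apply]
    grind
  have hmem {S : Set (Fin n)} := indicator_mem_ncone_PF_self hmono hnonneg (S := S)
  obtain ⟨a, ha, b, hb, hab, hra, hsb⟩ :=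
    hsimp.exists_riesz_decomposition (hmem hA) (hmem hB) (hmem hD) hneg hsum
  rw [mem_ncone_PF_self_iff hmono hnonneg] at ha hb hra hsb
  have hzj : u z < u j := hz ▸ hj
  have hk : 0 < u k := htie ▸ hj
  have hzk : u z < u k := hz ▸ hk
  have hjz : j ≠ z := by grind
  have habj : a j + b j = 1 := by simpa using congrFun hab j
  have habk : a k + b k = 0 := by simpa [hjk.symm] using congrFun hab k
  have hajz : 1 - a z ≤ 1 - a j := by simpa [D, hj] using hra.1 hzj
  have hbj : b j ≤ 0 := by simpa [hjz] using hsb.2 j hj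
  linarith [ha.1 hzk, ha.2 k hk, hb.2 k hk]

lemma isTreeLike_of_isSimplicialFullCone (hmono : Monotone u) (hnonneg : ∀ i, 0 ≤ u i)
    (hsimp : IsSimplicialFullCone n (ncone n (PF n u) u)) : IsTreeLike u := by
  have hmax {i j : Fin n} (hij : i ≠ j) (hi : 0 < u i) (htie : u i = u j) (l : Fin n) :
      u l ≤ u i := by
    by_contra! hl
    exact not_isSimplicialFullCone_of_tie_lt hmono hnonneg hij hi htie hl hsimp
  refine ⟨fun i j => hmax, fun z i j hz hij hi htie => ?_⟩
  by_contra! hmin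
  exact not_isSimplicialFullCone_of_zero_of_tie hmono hnonneg hz hij hi htie
    (fun m hm => le_antisymm (hmax hij hi htie m) (hmin m hm)) hsimp

end Cycles

section Trees

variable {n : ℕ} {u v w : Fin n → ℝ} {i : Fin n}

/-- The element covered by `i` in the order that `ncone n (PF n u) v` defines on the positive
coordinates of the truncation `v` of `u`, if there is no tie below `i`. The bottom element stands
for an additional coordinate, equal to `0`. -/
def parent (u v : Fin n → ℝ) (i : Fin n) : WithBot (Fin n) :=
  (Finset.univ.filter fun j => 0 < v j ∧ u j < u i).max

/-- The coordinate functionals, including the functional `0` for the additional coordinate `⊥`. -/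
def coord : WithBot (Fin n) → Module.Dual ℝ (Fin n → ℝ) :=
  WithBot.recBotCoe 0 LinearMap.proj

lemma coord_parent_le {b : ℝ} (hb : 0 ≤ b) (h : ∀ j, 0 < v j → u j < u i → w j ≤ b) :
    coord (parent u v i) w ≤ b := by
  cases hp : parent u v i with
  | bot => exact hb
  | coe p =>
    have hmem := Finset.mem_of_max hp
    simp only [Finset.mem_filter, Finset.mem_univ, true_and] at hmem
    exact h p hmem.1 hmem.2

lemma IsTreeLike.nonneg_and_le_of_coord_parent_le (h : IsTreeLike u) (hv : IsTruncation u v)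
    (hmono : Monotone u) (hw : ∀ i, 0 < v i → coord (parent u v i) w ≤ w i) (hi : 0 < v i) :
    0 ≤ w i ∧ ∀ j, 0 < v j → u j < u i → w j ≤ w i := by
  induction i using WellFoundedLT.induction with
  | ind i ih =>
    have hwi := hw i hi
    cases hp : parent u v i with
    | bot =>
      rw [hp] at hwi
      refine ⟨hwi, fun j hj hji => ?_⟩
      have hempty := Finset.max_eq_bot.1 hp
      exact absurd (Finset.mem_filter.2 ⟨Finset.mem_univ j, hj, hji⟩)
        (hempty ▸ Finset.notMem_empty j)
    | coe p =>
      rw [hp] at hwi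
      replace hwi : w p ≤ w i := hwi
      have hmem := Finset.mem_of_max hp
      simp only [Finset.mem_filter, Finset.mem_univ, true_and] at hmem
      obtain ⟨hvp, hpi⟩ := hmem
      obtain ⟨hwp, hle⟩ := ih p (hmono.reflect_lt hpi) hvp
      refine ⟨hwp.trans hwi, fun j hj hji => ?_⟩
      rcases eq_or_ne j p with rfl | hjp
      · exact hwi
      have hjp' : j ≤ p := WithBot.coe_le_coe.1
        (hp ▸ Finset.le_max (Finset.mem_filter.2 ⟨Finset.mem_univ j, hj, hji⟩))
      have hlt : u j < u p := by
        refine (hmono hjp').lt_of_ne fun htie => ?_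
        have huj : 0 < u j := hv.eq_of_pos hj ▸ hj
        exact (h.le_of_tie hjp huj htie i).not_gt hji
      exact (hle j hj hlt).trans hwi

lemma isSimplicialFullCone_of_mem_iff {C : Set (Fin n → ℝ)}
    (hsalient : ∀ w ∈ C, -w ∈ C → w = 0) (anchor : WithBot (Fin n)) (p : Fin n → WithBot (Fin n))
    (s : Set (Fin n))
    (hC : ∀ w, w ∈ C ↔ (∀ i ∈ s, coord (p i) w ≤ w i) ∧ ∀ i ∉ s, w i ≤ coord anchor w) :
    IsSimplicialFullCone n C := by
  classical
  refine IsSimplicialFullCone.of_halfspaces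
    (fun i => if i ∈ s then .proj i - coord (p i) else coord anchor - .proj i) (fun w => ?_)
    hsalient
  rw [hC]
  constructor
  · rintro ⟨h₁, h₂⟩ i
    split_ifs with hi
    exacts [sub_nonneg.2 (h₁ i hi), sub_nonneg.2 (h₂ i hi)]
  · intro h
    refine ⟨fun i hi => ?_, fun i hi => ?_⟩
    · simpa [hi] using h i
    · simpa [hi] using h i

lemma IsTreeLike.exists_pos_forall_lt {ι : Type*} [Finite ι] {u : ι → ℝ} (h : IsTreeLike u)
    {l : ι} (hl : 0 < u l) :
    ∃ f, 0 < u f ∧ ∀ z j, u z = 0 → 0 < u j → j ≠ f → u f < u j := by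
  obtain ⟨f, hf, hmin⟩ := Set.exists_min_image {j | 0 < u j} u (Set.toFinite _) ⟨l, hl⟩
  refine ⟨f, hf, fun z j hz hj hjf => (hmin j hj).lt_of_ne fun htie => ?_⟩
  obtain ⟨m, hm, hmf⟩ := h.exists_lt_of_tie hz hjf.symm hf htie
  exact (hmin m hm).not_gt hmf

lemma IsTruncation.isSimplicialFullCone_ncone_of_eq_zero_of_pos (hv : IsTruncation u v)
    (hmono : Monotone u) (hnonneg : ∀ i, 0 ≤ u i) (h : IsTreeLike u) {m : Fin n} (hm : v m = 0)
    (hum : 0 < u m) : IsSimplicialFullCone n (ncone n (PF n u) v) := by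
  refine isSimplicialFullCone_of_mem_iff
    (fun w => eq_zero_of_mem_ncone_PF_of_neg_mem hmono hnonneg hum) ⊥ (parent u v) {i | 0 < v i}
    fun w => ?_
  have hzero_of {i} (hi : ¬ 0 < v i) : v i = 0 := le_antisymm (not_lt.1 hi) (hv.nonneg hnonneg i)
  rw [hv.mem_ncone_iff hmono hnonneg]
  constructor
  · rintro ⟨hpos, hzero, hle⟩
    exact ⟨fun i hi => coord_parent_le (hpos i hi) fun j _ hji => hle j i hi hji,
      fun i hi => hzero i m (hzero_of hi) hm hum⟩
  · rintro ⟨hparent, hanchor⟩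
    have hchain {i} (hi : 0 < v i) := h.nonneg_and_le_of_coord_parent_le hv hmono hparent hi
    refine ⟨fun i hi => (hchain hi).1, fun i m hi _ _ => hanchor i hi.not_gt,
      fun i j hj hij => ?_⟩
    by_cases hi : 0 < v i
    · exact (hchain hj).2 i hi hij
    · exact (hanchor i hi).trans (hchain hj).1

lemma isSimplicialFullCone_ncone_PF_self (hmono : Monotone u) (hnonneg : ∀ i, 0 ≤ u i)
    (h : IsTreeLike u) {l : Fin n} (hl : 0 < u l) :
    IsSimplicialFullCone n (ncone n (PF n u) u) := by
  -- Above the zeros of `u` the diagram is a tree as only one coordinate `f` covers them.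
  obtain ⟨f, hf, hleast⟩ := h.exists_pos_forall_lt hl
  refine isSimplicialFullCone_of_mem_iff
    (fun w => eq_zero_of_mem_ncone_PF_of_neg_mem hmono hnonneg hl) f (parent u u) {i | 0 < u i}
    fun w => ?_
  have hzero_of {i} (hi : ¬ 0 < u i) : u i = 0 := le_antisymm (not_lt.1 hi) (hnonneg i)
  rw [mem_ncone_PF_self_iff hmono hnonneg]
  constructor
  · rintro ⟨hle, hpos⟩
    exact ⟨fun i hi => coord_parent_le (hpos i hi) fun j _ hji => hle hji,
      fun i hi => hle ((hzero_of hi).trans_lt hf)⟩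
  · rintro ⟨hparent, hanchor⟩
    have hchain {i} (hi : 0 < u i) :=
      h.nonneg_and_le_of_coord_parent_le (isTruncation_self hmono) hmono hparent hi
    refine ⟨fun i j hij => ?_, fun i hi => (hchain hi).1⟩
    have hj : 0 < u j := (hnonneg i).trans_lt hij
    by_cases hi : 0 < u i
    · exact (hchain hj).2 i hi hij
    · refine (hanchor i hi).trans ?_
      rcases eq_or_ne j f with rfl | hjf
      · exact le_rfl
      · exact (hchain hj).2 f hf (hleast i j (hzero_of hi) hj hjf)

lemma IsTruncation.isSimplicialFullCone_ncone (hv : IsTruncation u v) (hmono : Monotone u)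
    (hnonneg : ∀ i, 0 ≤ u i) (h : IsTreeLike u) {l : Fin n} (hl : 0 < u l) :
    IsSimplicialFullCone n (ncone n (PF n u) v) := by
  by_cases hproper : ∃ m, v m = 0 ∧ 0 < u m
  · obtain ⟨m, hm, hum⟩ := hproper
    exact hv.isSimplicialFullCone_ncone_of_eq_zero_of_pos hmono hnonneg h hm hum
  · obtain rfl : v = u := by
      funext i
      by_contra hvi
      have hi : v i = 0 := (hv.eq_zero_or_eq i).resolve_right hvi
      exact hproper ⟨i, hi, (hnonneg i).lt_of_ne fun hui => hvi (hi.trans hui)⟩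
    exact isSimplicialFullCone_ncone_PF_self hmono hnonneg h hl

lemma forall_extremePoints_isSimplicialFullCone_iff_isTreeLike (hmono : Monotone u)
    (hnonneg : ∀ i, 0 ≤ u i) {l : Fin n} (hl : 0 < u l) :
    (∀ v ∈ Set.extremePoints ℝ (PF n u), IsSimplicialFullCone n (ncone n (PF n u) v)) ↔
      IsTreeLike u := by
  refine ⟨fun h => isTreeLike_of_isSimplicialFullCone hmono hnonneg
    (h u (mem_extremePoints_PF_self hmono hnonneg)), fun h v hv => ?_⟩
  obtain ⟨σ, hσ⟩ := exists_isTruncation_comp_perm hmono hv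
  have hpre : ncone n (PF n u) v =
      LinearEquiv.funCongrLeft ℝ ℝ σ ⁻¹' ncone n (PF n u) (v ∘ σ) :=
    Set.ext fun w => (comp_perm_mem_ncone_PF_iff σ).symm
  rw [hpre]
  exact (hσ.isSimplicialFullCone_ncone hmono hnonneg h hl).preimage _

end Trees

section Multiplicities

variable {ι : Type*} {u : ι → ℝ} {L : ι}

lemma natCard_fiber_eq_one_iff {α : Type*} (f : ι → α) (i : ι) :
    Nat.card {j // f j = f i} = 1 ↔ ∀ j, f j = f i → j = i := by
  rw [Nat.card_eq_one_iff_exists]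
  constructor
  · rintro ⟨x, hx⟩ j hj
    exact congrArg Subtype.val ((hx ⟨j, hj⟩).trans (hx ⟨i, rfl⟩).symm)
  · exact fun h => ⟨⟨i, rfl⟩, fun j => Subtype.ext (h j j.2)⟩

lemma natCard_subtype_not_eq_sub_one_iff [Finite ι] {p : ι → Prop} {i : ι} (hi : p i) :
    Nat.card {j // ¬ p j} = Nat.card ι - 1 ↔ ∀ j, p j → j = i := by
  have hadd : {j | p j}.ncard + Nat.card {j // ¬ p j} = Nat.card ι :=
    Set.ncard_add_ncard_compl {j | p j}
  have hpos : 0 < {j | p j}.ncard := (Set.ncard_pos (Set.toFinite _)).2 ⟨i, hi⟩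
  have hone : Nat.card {j // ¬ p j} = Nat.card ι - 1 ↔ {j | p j}.ncard ≤ 1 := by omega
  rw [hone, Set.ncard_le_one]
  exact ⟨fun h j hj => h j hj i hi, fun h j hj k hk => (h j hj).trans (h k hk).symm⟩

lemma isTreeLike_iff_of_ne (hL : ∀ i, u i ≤ u L) (hne : ∃ i j, 0 < u i ∧ 0 < u j ∧ u i ≠ u j) :
    IsTreeLike u ↔ ∀ i, 0 < u i → u i ≠ u L → ∀ j, u j = u i → j = i := by
  constructor
  · intro h i hi hiL j hji
    by_contra hij
    exact hiL ((hL i).antisymm (h.le_of_tie (Ne.symm hij) hi hji.symm L))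
  · intro h
    have htop {i j} (hij : i ≠ j) (hi : 0 < u i) (htie : u i = u j) : u i = u L := by
      by_contra hiL
      exact hij (h i hi hiL j htie.symm).symm
    refine ⟨fun i j hij hi htie l => htop hij hi htie ▸ hL l, fun _ i j _ hij hi htie => ?_⟩
    rw [htop hij hi htie]
    obtain ⟨k, l, hk, hl, hkl⟩ := hne
    by_cases hkL : u k = u L
    · exact ⟨l, hl, (hL l).lt_of_ne fun hlL => hkl (hkL.trans hlL.symm)⟩
    · exact ⟨k, hk, (hL k).lt_of_ne hkL⟩

lemma isTreeLike_iff_of_eq (hnonneg : ∀ i, 0 ≤ u i) (hpos : 0 < u L)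
    (heq : ∀ i, 0 < u i → u i = u L) :
    IsTreeLike u ↔ (∀ i, u i = u L) ∨ ∀ i, 0 < u i → i = L := by
  constructor
  · intro h
    by_contra! hcontra
    obtain ⟨⟨z, hz⟩, i, hi, hiL⟩ := hcontra
    have hz0 : u z = 0 := by
      by_contra hz0
      exact hz (heq z ((hnonneg z).lt_of_ne' hz0))
    obtain ⟨m, hm, hmi⟩ := h.exists_lt_of_tie hz0 hiL hi (heq i hi)
    exact hmi.ne ((heq m hm).trans (heq i hi).symm)
  · intro h
    refine ⟨fun i j _ hi _ l => ?_, fun z i j hz hij hi htie => ?_⟩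
    · rcases (hnonneg l).eq_or_lt with hl | hl
      · exact hl ▸ hi.le
      · rw [heq l hl, heq i hi]
    · rcases h with h | h
      · exact absurd (hz.symm.trans (h z)) hpos.ne
      · exact absurd ((h i hi).trans (h j (htie ▸ hi)).symm) hij

lemma isTreeLike_iff_multiplicities [Finite ι] (hL : ∀ i, u i ≤ u L) (hnonneg : ∀ i, 0 ≤ u i)
    (hpos : 0 < u L) :
    IsTreeLike u ↔ (∃ d, 0 < d ∧ ∀ i, u i = d) ∨ Nat.card {i // u i = 0} = Nat.card ι - 1 ∨
      ((∃ i j, 0 < u i ∧ 0 < u j ∧ u i ≠ u j) ∧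
        ∀ i, 0 < u i → u i ≠ u L → Nat.card {j // u j = u i} = 1) := by
  have hzero (i) : u i = 0 ↔ ¬ 0 < u i := by grind
  have hconst : (∃ d, 0 < d ∧ ∀ i, u i = d) ↔ ∀ i, u i = u L :=
    ⟨fun ⟨d, _, hd⟩ i => (hd i).trans (hd L).symm, fun h => ⟨u L, hpos, h⟩⟩
  simp only [hzero, hconst, natCard_subtype_not_eq_sub_one_iff (p := (0 < u ·)) hpos,
    natCard_fiber_eq_one_iff]
  by_cases hne : ∃ i j, 0 < u i ∧ 0 < u j ∧ u i ≠ u j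
  · have hconst' : ¬ ∀ i, u i = u L := by grind
    have hunique : ¬ ∀ i, 0 < u i → i = L := by grind
    simp only [isTreeLike_iff_of_ne hL hne, hconst', hunique, hne, true_and, false_or]
  · have heq (i) (hi : 0 < u i) : u i = u L := by
      by_contra hiL
      exact hne ⟨i, L, hi, hpos, hiL⟩
    simp only [isTreeLike_iff_of_eq hnonneg hpos heq, hne, false_and, or_false]

end Multiplicities

/-- `PF(u)` is simple (the normal cone at every extreme point is a
full-dimensional simplicial cone) iff the multiplicity vector of `u` is
`(0,n)`, `(n-1,1)`, or has `ℓ ≥ 2` and `m₁ = ⋯ = m_{ℓ-1} = 1`.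
Here `m(u) = (0,n)` means all coordinates of `u` equal some `d > 0`;
`m(u) = (n-1,1)` means `u` has exactly `n-1` zero coordinates; the third case
says `u` has at least two distinct positive values and every positive value
other than the largest one `u_n` occurs exactly once. -/
theorem parking_polytope_simple_iff
    (n : ℕ) (hn : 1 ≤ n) (u : Fin n → ℝ)
    (hmono : Monotone u) (hnonneg : ∀ i, 0 ≤ u i) (hne : u ≠ 0) :
    (∀ v ∈ Set.extremePoints ℝ (PF n u),
        IsSimplicialFullCone n (ncone n (PF n u) v)) ↔
      ((∃ d : ℝ, 0 < d ∧ ∀ i, u i = d) ∨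
        Nat.card {i : Fin n // u i = 0} = n - 1 ∨
        ((∃ i j, 0 < u i ∧ 0 < u j ∧ u i ≠ u j) ∧
          ∀ i : Fin n, 0 < u i → u i ≠ u ⟨n - 1, by omega⟩ →
            Nat.card {j : Fin n // u j = u i} = 1)) := by
  have hL (i : Fin n) : u i ≤ u ⟨n - 1, by omega⟩ := hmono (Nat.le_sub_one_of_lt i.2)
  obtain ⟨l, hl⟩ := Function.ne_iff.1 hne
  have hpos : 0 < u ⟨n - 1, by omega⟩ := ((hnonneg l).lt_of_ne' hl).trans_le (hL l)
  rw [forall_extremePoints_isSimplicialFullCone_iff_isTreeLike hmono hnonneg hpos,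
    isTreeLike_iff_multiplicities hL hnonneg hpos, Nat.card_fin]
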